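/- Let M = (W,R,V,P) be an epistemic probability model and define N^{1/2}(w) := {X ⊆ [w] : P_w(X) > 1/2} for each w ∈ W. Then (W,R,V,N^{1/2}) is a mid-threshold epistemic neighborhood model; that is, in addition to (kbc), (kbf), (n), (a), (kbm), the function N^{1/2} satisfies (d), (sc), and (scott). -/

import Mathlib

open Classical

/-- An epistemic probability model: finite nonempty world set, S5 (equivalence)
accessibility relation, valuation, and a finitely additive probability measure
with full support. -/
structure EPM (W A : Type) where
  finite : Finite W
  nonempty : Nonempty W
  R : W → W → Prop
  equiv : Equivalence R
  V : W → Set A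
  P : Set W → ℝ
  nonneg : ∀ X : Set W, 0 ≤ P X
  le_one : ∀ X : Set W, P X ≤ 1
  norm : P Set.univ = 1
  add : ∀ X Y : Set W, X ∩ Y = ∅ → P (X ∪ Y) = P X + P Y
  full : ∀ w : W, 0 < P {w}

/-- The equivalence class `[w]` of a world. -/
def EPM.cl {W A : Type} (M : EPM W A) (w : W) : Set W := {v | M.R w v}

/-- `P_w(X) := P(X ∩ [w]) / P([w])`. -/
noncomputable def EPM.Pw {W A : Type} (M : EPM W A) (w : W) (X : Set W) : ℝ :=
  M.P (X ∩ M.cl w) / M.P (M.cl w)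

/-- An epistemic neighborhood model. -/
structure ENM (W A : Type) where
  finite : Finite W
  nonempty : Nonempty W
  R : W → W → Prop
  equiv : Equivalence R
  V : W → Set A
  N : W → Set (Set W)
  kbc : ∀ w : W, ∀ X ∈ N w, X ⊆ {v | R w v}
  kbf : ∀ w : W, ∅ ∉ N w
  contains_class : ∀ w : W, {v | R w v} ∈ N w
  agreeN : ∀ w v : W, R w v → N v = N w
  kbm : ∀ w : W, ∀ X ∈ N w, ∀ Y : Set W, X ⊆ Y → Y ⊆ {v | R w v} → Y ∈ N w

/-- The equivalence class `[w]` of a world. -/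
def ENM.cl {W A : Type} (M : ENM W A) (w : W) : Set W := {v | M.R w v}

/-- A mid-threshold epistemic neighborhood model: an epistemic neighborhood model
additionally satisfying (d), (sc) and (scott). -/
structure MidENM (W A : Type) extends ENM W A where
  d : ∀ w : W, ∀ X ∈ N w, {v | R w v} \ X ∉ N w
  sc : ∀ w : W, ∀ X Y : Set W, X ⊆ {v | R w v} → Y ⊆ {v | R w v} →
      {v | R w v} \ X ∉ N w → X ⊂ Y → Y ∈ N w
  scott : ∀ w : W, ∀ m : ℕ, ∀ X Y : Fin (m + 1) → Set W,
      (∀ i, X i ⊆ {v | R w v}) → (∀ i, Y i ⊆ {v | R w v}) →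
      (∀ v : W, (Finset.univ.filter (fun i => v ∈ X i)).card ≤
                (Finset.univ.filter (fun i => v ∈ Y i)).card) →
      X 0 ∈ N w →
      (∀ i : Fin (m + 1), i ≠ 0 → {v | R w v} \ X i ∉ N w) →
      ∃ j : Fin (m + 1), Y j ∈ N w

/-!
Each `P_w` is a finitely additive probability measure that is strictly monotone on subsets of `[w]`,
and `[w] \ X ∉ N^c(w)` says `1 - c ≤ P_w(X)`; so every condition on `N^c` is an inequality between
real numbers, holding for a range of thresholds `c`, and `c = 1/2` lies in all the ranges.
For (scott), sum `P_w` over the families: counting each world with multiplicity gives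
`∑ P_w(X_i) ≤ ∑ P_w(Y_i)`, whereas if no `Y_j` were in `N^c(w)` then
`P_w(Y_i) ≤ c ≤ 1 - c ≤ P_w(X_i)` for `i ≠ 1` and `P_w(Y_1) ≤ c < P_w(X_1)`.
-/

open MeasureTheory

section AddContent

variable {α ι G : Type*} [Fintype ι]

theorem addContent_eq_sum_singleton [AddCommMonoid G] (m : AddContent G (Set.univ : Set (Set α)))
    (s : Finset α) : m s = ∑ a ∈ s, m {a} := by
  rw [← addContent_biUnion (fun _ _ ↦ Set.mem_univ _)
    (fun _ _ _ _ hab ↦ Set.disjoint_singleton.2 hab) (Set.mem_univ _)]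
  exact congrArg m (Set.biUnion_of_singleton (s : Set α)).symm

theorem sum_addContent_eq_sum_card_nsmul [AddCommMonoid G] [Fintype α]
    (m : AddContent G (Set.univ : Set (Set α))) (X : ι → Set α) :
    ∑ i, m (X i) = ∑ a, (Finset.univ.filter (fun i => a ∈ X i)).card • m {a} := by
  calc ∑ i, m (X i) = ∑ i, ∑ a, if a ∈ X i then m {a} else 0 := by
        refine Finset.sum_congr rfl fun i _ ↦ ?_
        rw [← Finset.sum_filter, ← addContent_eq_sum_singleton, Finset.coe_filter_univ,
          Set.ofPred_mem_eq]
    _ = ∑ a, ∑ i, if a ∈ X i then m {a} else 0 := Finset.sum_comm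
    _ = ∑ a, (Finset.univ.filter (fun i => a ∈ X i)).card • m {a} := by
        simp only [← Finset.sum_filter, Finset.sum_const]

theorem sum_addContent_le_sum_of_card_le [AddCommMonoid G] [PartialOrder G] [IsOrderedAddMonoid G]
    [Finite α] {m : AddContent G (Set.univ : Set (Set α))} (hm : ∀ a, 0 ≤ m {a}) {X Y : ι → Set α}
    (hcard : ∀ a, (Finset.univ.filter (fun i => a ∈ X i)).card ≤
      (Finset.univ.filter (fun i => a ∈ Y i)).card) :
    ∑ i, m (X i) ≤ ∑ i, m (Y i) := by
  have := Fintype.ofFinite α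
  rw [sum_addContent_eq_sum_card_nsmul, sum_addContent_eq_sum_card_nsmul]
  exact Finset.sum_le_sum fun a _ ↦ nsmul_le_nsmul_left (hm a) (hcard a)

end AddContent

namespace EPM

variable {W A : Type} (M : EPM W A) {w v : W} {X Y : Set W} {c : ℝ}

section ConditionalProbability

theorem P_empty : M.P ∅ = 0 := by
  simpa only [Set.union_empty, left_eq_add] using M.add ∅ ∅ (Set.empty_inter ∅)

theorem P_pos (hX : X.Nonempty) : 0 < M.P X := by
  obtain ⟨x, hx⟩ := hX
  have hsplit := M.add {x} (X \ {x}) (Set.inter_sdiff_self {x} X)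
  rw [Set.union_sdiff_cancel (Set.singleton_subset_iff.2 hx)] at hsplit
  exact hsplit ▸ add_pos_of_pos_of_nonneg (M.full x) (M.nonneg _)

theorem mem_cl_self (w : W) : w ∈ M.cl w :=
  M.equiv.refl w

theorem cl_eq_of_R (h : M.R w v) : M.cl v = M.cl w :=
  Set.ext fun _ ↦ ⟨M.equiv.trans h, M.equiv.trans (M.equiv.symm h)⟩

theorem P_cl_pos (w : W) : 0 < M.P (M.cl w) :=
  M.P_pos ⟨w, M.mem_cl_self w⟩

theorem Pw_nonneg (w : W) (X : Set W) : 0 ≤ M.Pw w X :=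
  div_nonneg (M.nonneg _) (M.nonneg _)

theorem Pw_pos (h : (X ∩ M.cl w).Nonempty) : 0 < M.Pw w X :=
  div_pos (M.P_pos h) (M.P_cl_pos w)

theorem Pw_cl (w : W) : M.Pw w (M.cl w) = 1 := by
  rw [Pw, Set.inter_self, div_self (M.P_cl_pos w).ne']

theorem Pw_empty (w : W) : M.Pw w ∅ = 0 := by
  rw [Pw, Set.empty_inter, P_empty, zero_div]

theorem Pw_union (w : W) (h : Disjoint X Y) : M.Pw w (X ∪ Y) = M.Pw w X + M.Pw w Y := by
  have hdisj : Disjoint (X ∩ M.cl w) (Y ∩ M.cl w) :=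
    h.mono Set.inter_subset_left Set.inter_subset_left
  rw [Pw, Set.union_inter_distrib_right, M.add _ _ hdisj.inter_eq, add_div, Pw, Pw]

/-- The conditional probability `P_w` as a finitely additive content on all sets of worlds, which
makes the library's results on sums of contents available. -/
noncomputable def condContent (w : W) : AddContent ℝ (Set.univ : Set (Set W)) :=
  IsSetRing.addContent_of_union (M.Pw w) ⟨trivial, fun _ _ _ _ ↦ trivial, fun _ _ _ _ ↦ trivial⟩
    (M.Pw_empty w) (fun _ _ h ↦ M.Pw_union w h)

theorem Pw_sdiff (w : W) (h : X ⊆ Y) : M.Pw w (Y \ X) = M.Pw w Y - M.Pw w X := by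
  rw [eq_sub_iff_add_eq', ← M.Pw_union w Set.disjoint_sdiff_right, Set.union_sdiff_cancel h]

theorem Pw_mono (w : W) (h : X ⊆ Y) : M.Pw w X ≤ M.Pw w Y := by
  rw [← sub_nonneg, ← M.Pw_sdiff w h]
  exact M.Pw_nonneg w _

theorem Pw_lt_Pw_of_ssubset (hY : Y ⊆ M.cl w) (h : X ⊂ Y) : M.Pw w X < M.Pw w Y := by
  obtain ⟨x, hxY, hxX⟩ := Set.exists_of_ssubset h
  rw [← sub_pos, ← M.Pw_sdiff w h.subset]
  exact M.Pw_pos ⟨x, ⟨hxY, hxX⟩, hY hxY⟩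

theorem sum_Pw_le_sum_Pw {ι : Type*} [Fintype ι] {X Y : ι → Set W} (w : W)
    (hcard : ∀ v, (Finset.univ.filter (fun i => v ∈ X i)).card ≤
      (Finset.univ.filter (fun i => v ∈ Y i)).card) :
    ∑ i, M.Pw w (X i) ≤ ∑ i, M.Pw w (Y i) :=
  have := M.finite
  sum_addContent_le_sum_of_card_le (m := M.condContent w) (fun _ ↦ M.Pw_nonneg w _) hcard

end ConditionalProbability

section Threshold

/-- The neighborhood function `N^c(w) = {X ⊆ [w] : P_w(X) > c}` at an arbitrary threshold `c`. -/
def thresholdNbhd (c : ℝ) (w : W) : Set (Set W) :=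
  {X | X ⊆ M.cl w ∧ c < M.Pw w X}

/-- The epistemic neighborhood model `(W, R, V, N^c)` derived from `M`. -/
def thresholdModel (hc₀ : 0 ≤ c) (hc₁ : c < 1) : ENM W A where
  finite := M.finite
  nonempty := M.nonempty
  R := M.R
  equiv := M.equiv
  V := M.V
  N := M.thresholdNbhd c
  kbc _ _ hX := hX.1
  kbf w h := (h.2.trans_eq (M.Pw_empty w)).not_ge hc₀
  contains_class w := ⟨subset_rfl, hc₁.trans_eq (M.Pw_cl w).symm⟩
  agreeN w v h := by simp only [thresholdNbhd, Pw, M.cl_eq_of_R h]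
  kbm w _ hX _ hXY hY := ⟨hY, hX.2.trans_le (M.Pw_mono w hXY)⟩

variable {M}

theorem cl_sdiff_mem_thresholdNbhd_iff (hX : X ⊆ M.cl w) :
    M.cl w \ X ∈ M.thresholdNbhd c w ↔ M.Pw w X < 1 - c := by
  rw [thresholdNbhd, Set.mem_ofPred_eq, M.Pw_sdiff w hX, M.Pw_cl, lt_sub_comm]
  exact and_iff_right Set.sdiff_subset

theorem cl_sdiff_notMem_thresholdNbhd (hc : 1 / 2 ≤ c) (hX : X ∈ M.thresholdNbhd c w) :
    M.cl w \ X ∉ M.thresholdNbhd c w := by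
  rw [cl_sdiff_mem_thresholdNbhd_iff hX.1]
  linarith [hX.2]

theorem le_Pw_of_cl_sdiff_notMem_thresholdNbhd (hc : c ≤ 1 / 2) (hX : X ⊆ M.cl w)
    (h : M.cl w \ X ∉ M.thresholdNbhd c w) : c ≤ M.Pw w X := by
  rw [cl_sdiff_mem_thresholdNbhd_iff hX] at h
  linarith

theorem mem_thresholdNbhd_of_ssubset (hc : c ≤ 1 / 2) (hY : Y ⊆ M.cl w) (hXY : X ⊂ Y)
    (h : M.cl w \ X ∉ M.thresholdNbhd c w) : Y ∈ M.thresholdNbhd c w :=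
  ⟨hY, (le_Pw_of_cl_sdiff_notMem_thresholdNbhd hc (hXY.subset.trans hY) h).trans_lt
    (M.Pw_lt_Pw_of_ssubset hY hXY)⟩

theorem exists_mem_thresholdNbhd_of_card_le (hc : c ≤ 1 / 2) {ι : Type*} [Fintype ι]
    {X Y : ι → Set W} {i₀ : ι} (hX : ∀ i, X i ⊆ M.cl w) (hY : ∀ i, Y i ⊆ M.cl w)
    (hcard : ∀ v, (Finset.univ.filter (fun i => v ∈ X i)).card ≤
      (Finset.univ.filter (fun i => v ∈ Y i)).card)
    (h₀ : X i₀ ∈ M.thresholdNbhd c w)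
    (hcompl : ∀ i, i ≠ i₀ → M.cl w \ X i ∉ M.thresholdNbhd c w) :
    ∃ j, Y j ∈ M.thresholdNbhd c w := by
  by_contra! hYN
  have hYle (i : ι) : M.Pw w (Y i) ≤ c := not_lt.1 fun h ↦ hYN i ⟨hY i, h⟩
  have hleX (i : ι) : c ≤ M.Pw w (X i) := by
    obtain rfl | hi := eq_or_ne i i₀
    · exact h₀.2.le
    · exact le_Pw_of_cl_sdiff_notMem_thresholdNbhd hc (hX i) (hcompl i hi)
  have hlt : ∑ i, M.Pw w (Y i) < ∑ i, M.Pw w (X i) :=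
    Finset.sum_lt_sum (fun i _ ↦ (hYle i).trans (hleX i))
      ⟨i₀, Finset.mem_univ i₀, (hYle i₀).trans_lt h₀.2⟩
  exact hlt.not_ge (M.sum_Pw_le_sum_Pw w hcard)

end Threshold

end EPM

/-- The neighborhood function `N^{1/2}(w) = {X ⊆ [w] : P_w(X) > 1/2}` derived from an
epistemic probability model yields a mid-threshold epistemic neighborhood model. -/
theorem derived_midthreshold_model {W A : Type} (M : EPM W A) :
    ∃ M' : MidENM W A, M'.R = M.R ∧ M'.V = M.V ∧
      ∀ w : W, M'.N w = {X : Set W | X ⊆ M.cl w ∧ (1/2 : ℝ) < M.Pw w X} := by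
  let half : MidENM W A :=
    { M.thresholdModel (c := 1 / 2) (by norm_num) (by norm_num) with
      d := fun _ _ hX ↦ EPM.cl_sdiff_notMem_thresholdNbhd le_rfl hX
      sc := fun _ _ _ _ hY hX hXY ↦ EPM.mem_thresholdNbhd_of_ssubset le_rfl hY hXY hX
      scott := fun _ _ _ _ hX hY hcard h₀ hcompl ↦
        EPM.exists_mem_thresholdNbhd_of_card_le le_rfl hX hY hcard h₀ hcompl }
  exact ⟨half, rfl, rfl, fun _ ↦ rfl⟩
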